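/- Let R = F_q[X;θ] be the skew polynomial ring with multiplication rule X·a = θ(a)X. Let f ∈ R be a polynomial of degree n ≥ 1 with nonzero constant term. Then there exists an integer m ≥ n such that X^m − 1 is a right multiple of f, i.e., X^m − 1 = f·q for some q ∈ R. Moreover one can take m ≤ q^n + n − 2. -/

import Mathlib

open Polynomial

/-- The `k`-th coefficient of the skew product `f * g` in the skew polynomial ring
`F[X;θ]`, where multiplication satisfies `X · a = θ(a) · X`, so that
`(f*g)_k = ∑_{i+j=k} f_i θ^i(g_j)`. -/
noncomputable def skewMulCoeff {F : Type*} [Field F] (θ : RingAut F)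
    (f g : Polynomial F) (k : ℕ) : F :=
  ∑ i ∈ Finset.range (k + 1), f.coeff i * (θ ^ i) (g.coeff (k - i))

/-!
Right multiplication by `X` is an additive endomorphism of the finite quotient
`R[X;θ] ⧸ f R[X;θ]`, injective because the constant coefficient of `f` is regular. Division with
remainder identifies the quotient with the polynomials of degree `< n = deg f`, so it has
`|R| ^ n` elements. The orbit of the class of `1` is therefore a cycle, and it avoids `0`, so its
length `m` is less than `|R| ^ n`; the class of `X ^ m` is that of `1`.
-/

theorem exists_iterate_eq_self_of_injective {α : Type*} [Finite α] {φ : α → α}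
    (hφ : Function.Injective φ) {x z : α} (hz : φ z = z) (hx : x ≠ z) :
    ∃ m, 0 < m ∧ m < Nat.card α ∧ φ^[m] x = x := by
  classical
  have := Fintype.ofFinite α
  have iterate_ne (i : ℕ) : φ^[i] x ≠ z := fun h ↦
    hx (hφ.iterate i (h.trans (Function.iterate_fixed hz i).symm))
  refine ⟨Function.minimalPeriod φ x,
    Function.minimalPeriod_pos_of_mem_periodicPts (hφ.mem_periodicPts x), ?_,
    Function.iterate_minimalPeriod⟩
  calc Function.minimalPeriod φ x
      = ((Finset.range (Function.minimalPeriod φ x)).image (φ^[·] x)).card := by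
        rw [Finset.card_image_of_injOn, Finset.card_range]
        simpa using Function.iterate_injOn_Iio_minimalPeriod
    _ < Fintype.card α := Finset.card_lt_univ_of_notMem (x := z) (by simp [iterate_ne])
    _ = Nat.card α := Nat.card_eq_fintype_card.symm

section Semiring

variable {R : Type*} [Semiring R] (θ : R →+* R) (f q : R[X])

/-- Left multiplication by `f` in the skew polynomial ring `R[X;θ]`, in which `X * a = θ a * X`.
A skew polynomial is encoded by the ordinary polynomial with the same coefficients, written to the
left of the powers of `X`; right multiplication by `X` is then the ordinary one. -/
noncomputable def skewMul : R[X] →+ R[X] where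
  toFun q := f.sum fun i a ↦ C a * q.map (θ ^ i) * X ^ i
  map_zero' := by simp [sum_def]
  map_add' p q := by simp only [Polynomial.map_add, mul_add, add_mul, sum_add]

theorem skewMul_apply : skewMul θ f q = f.sum fun i a ↦ C a * q.map (θ ^ i) * X ^ i := rfl

theorem coeff_skewMul (k : ℕ) :
    (skewMul θ f q).coeff k =
      ∑ i ∈ Finset.range (k + 1), f.coeff i * θ^[i] (q.coeff (k - i)) := by
  simp only [skewMul_apply, sum_def, finsetSum_coeff, coeff_mul_X_pow', coeff_C_mul, coeff_map,
    RingHom.coe_pow]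
  rw [← Finset.sum_filter]
  refine Finset.sum_subset (fun i hi ↦ ?_) fun i hi hif ↦ ?_
  · simp only [Finset.mem_filter] at hi
    exact Finset.mem_range_succ_iff.mpr hi.2
  · have hfi : f.coeff i = 0 := by
      by_contra h
      exact hif (Finset.mem_filter.mpr ⟨mem_support_iff.mpr h, Finset.mem_range_succ_iff.mp hi⟩)
    rw [hfi, zero_mul]

theorem skewMul_mul_X : skewMul θ f (q * X) = skewMul θ f q * X := by
  simp only [skewMul_apply, sum_def, Finset.sum_mul, Polynomial.map_mul, map_X]
  exact Finset.sum_congr rfl fun i _ ↦ by simp only [mul_assoc, (commute_X_pow X i).eq]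

theorem coeff_skewMul_natDegree_add_natDegree :
    (skewMul θ f q).coeff (f.natDegree + q.natDegree) =
      f.leadingCoeff * θ^[f.natDegree] q.leadingCoeff := by
  rw [coeff_skewMul, Finset.sum_eq_single_of_mem f.natDegree (Finset.mem_range.mpr (by lia)),
    Nat.add_sub_cancel_left, coeff_natDegree, coeff_natDegree]
  intro i _ hi
  rcases hi.lt_or_gt with hi | hi
  · rw [coeff_eq_zero_of_natDegree_lt (p := q) (by lia), iterate_map_zero, mul_zero]
  · rw [coeff_eq_zero_of_natDegree_lt hi, zero_mul]

theorem natDegree_skewMul_le : (skewMul θ f q).natDegree ≤ f.natDegree + q.natDegree := by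
  refine natDegree_sum_le_of_forall_le _ _ fun i hi ↦ ?_
  calc (C (f.coeff i) * q.map (θ ^ i) * X ^ i).natDegree
      ≤ (q.map (θ ^ i)).natDegree + i :=
        natDegree_mul_le_of_le (natDegree_C_mul_le _ _) (natDegree_X_pow_le i)
    _ ≤ f.natDegree + q.natDegree := by
        have := natDegree_map_le (f := θ ^ i) (p := q)
        have := le_natDegree_of_mem_supp i hi
        lia

variable {θ f q}

theorem natDegree_skewMul (h : f.leadingCoeff * θ^[f.natDegree] q.leadingCoeff ≠ 0) :
    (skewMul θ f q).natDegree = f.natDegree + q.natDegree :=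
  natDegree_eq_of_le_of_coeff_ne_zero (natDegree_skewMul_le θ f q)
    (by rwa [coeff_skewMul_natDegree_add_natDegree])

theorem leadingCoeff_skewMul (h : f.leadingCoeff * θ^[f.natDegree] q.leadingCoeff ≠ 0) :
    (skewMul θ f q).leadingCoeff = f.leadingCoeff * θ^[f.natDegree] q.leadingCoeff := by
  rw [leadingCoeff, natDegree_skewMul h, coeff_skewMul_natDegree_add_natDegree]

end Semiring

section Ring

variable {R : Type*} [Ring R] {θ : R →+* R} {f : R[X]}

theorem natDegree_le_of_mem_range_skewMul (hθ : Function.Injective θ)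
    (hf : IsLeftRegular f.leadingCoeff) {g : R[X]} (hg : g ∈ (skewMul θ f).range) (hg0 : g ≠ 0) :
    f.natDegree ≤ g.natDegree := by
  obtain ⟨q, rfl⟩ := hg
  have hq : q ≠ 0 := by
    rintro rfl
    exact hg0 (map_zero _)
  have hlead : f.leadingCoeff * θ^[f.natDegree] q.leadingCoeff ≠ 0 := by
    rwa [Ne, hf.mul_left_eq_zero_iff, ← iterate_map_zero θ f.natDegree,
      (hθ.iterate f.natDegree).eq_iff, leadingCoeff_eq_zero]
  rw [natDegree_skewMul hlead]
  exact Nat.le_add_right _ _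

theorem exists_degree_sub_skewMul_lt_degree (hθ : Function.Surjective θ)
    (hf : IsUnit f.leadingCoeff) {g : R[X]} (hg : g ≠ 0) (hfg : f.natDegree ≤ g.natDegree) :
    ∃ q, (g - skewMul θ f q).degree < g.degree := by
  obtain ⟨u, hu⟩ := hf
  obtain ⟨b, hb⟩ := hθ.iterate f.natDegree (↑u⁻¹ * g.leadingCoeff)
  have hb0 : b ≠ 0 := by
    rintro rfl
    rw [iterate_map_zero, eq_comm, Units.mul_right_eq_zero, leadingCoeff_eq_zero] at hb
    exact hg hb
  let q := monomial (g.natDegree - f.natDegree) b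
  have hlead : f.leadingCoeff * θ^[f.natDegree] q.leadingCoeff = g.leadingCoeff := by
    rw [leadingCoeff_monomial, hb, ← hu, Units.mul_inv_cancel_left]
  have hlead0 : f.leadingCoeff * θ^[f.natDegree] q.leadingCoeff ≠ 0 := by
    rwa [hlead, leadingCoeff_ne_zero]
  have hcoeff : (skewMul θ f q).leadingCoeff = g.leadingCoeff :=
    (leadingCoeff_skewMul hlead0).trans hlead
  have hnatDegree : (skewMul θ f q).natDegree = g.natDegree := by
    rw [natDegree_skewMul hlead0, natDegree_monomial_eq _ hb0, Nat.add_sub_cancel' hfg]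
  have hq0 : skewMul θ f q ≠ 0 := by
    rwa [← leadingCoeff_ne_zero, hcoeff, leadingCoeff_ne_zero]
  refine ⟨q, degree_sub_lt_left ?_ hg hcoeff.symm⟩
  rw [degree_eq_natDegree hg, degree_eq_natDegree hq0, hnatDegree]

theorem exists_mem_degreeLT_sub_mem_range_skewMul (hθ : Function.Surjective θ)
    (hf : IsUnit f.leadingCoeff) (g : R[X]) :
    ∃ r ∈ degreeLT R f.natDegree, g - r ∈ (skewMul θ f).range := by
  induction g using degree_lt_wf.induction with
  | _ g ih =>
    by_cases hg : g.degree < f.natDegree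
    · exact ⟨g, mem_degreeLT.mpr hg, by simp [zero_mem]⟩
    · have hg0 : g ≠ 0 := by
        rintro rfl
        exact hg (by simp)
      have hfg : f.natDegree ≤ g.natDegree := by
        simpa [degree_eq_natDegree hg0] using hg
      obtain ⟨q, hq⟩ := exists_degree_sub_skewMul_lt_degree hθ hf hg0 hfg
      obtain ⟨r, hr, hmem⟩ := ih _ hq
      have hadd := add_mem hmem (AddMonoidHom.mem_range.mpr ⟨q, rfl⟩)
      rw [sub_right_comm, sub_add_cancel] at hadd
      exact ⟨r, hr, hadd⟩

theorem mul_X_mem_range_skewMul_iff (hf : IsLeftRegular (f.coeff 0)) {g : R[X]} :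
    g * X ∈ (skewMul θ f).range ↔ g ∈ (skewMul θ f).range := by
  constructor
  · rintro ⟨p, hp⟩
    have hp0 : p.coeff 0 = 0 := by
      have := congrArg (coeff · 0) hp
      simpa [coeff_skewMul, hf.mul_left_eq_zero_iff] using this
    have hpX : p.divX * X = p := by simpa [hp0] using divX_mul_X_add p
    refine ⟨p.divX, isRegular_X.right ?_⟩
    simp only [← skewMul_mul_X, hpX, hp]
  · rintro ⟨p, rfl⟩
    exact ⟨p * X, skewMul_mul_X θ f p⟩

variable (θ f)

/-- The quotient `R[X;θ] ⧸ f R[X;θ]` by the right ideal generated by `f`, as an additive group. -/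
abbrev SkewQuotient : Type _ := R[X] ⧸ (skewMul θ f).range

namespace SkewQuotient

/-- Right multiplication by `X` on `R[X;θ] ⧸ f R[X;θ]`. -/
noncomputable def mulX : SkewQuotient θ f →+ SkewQuotient θ f :=
  QuotientAddGroup.map _ _ (AddMonoidHom.mulRight X) <| by
    rintro _ ⟨p, rfl⟩
    exact ⟨p * X, skewMul_mul_X θ f p⟩

theorem mulX_mk (g : R[X]) :
    mulX θ f (g : SkewQuotient θ f) = ((g * X : R[X]) : SkewQuotient θ f) := rfl

theorem iterate_mulX_mk (m : ℕ) (g : R[X]) :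
    (mulX θ f)^[m] (g : SkewQuotient θ f) = ((g * X ^ m : R[X]) : SkewQuotient θ f) := by
  induction m with
  | zero => simp
  | succ m ih => rw [Function.iterate_succ_apply', ih, mulX_mk, pow_succ, mul_assoc]

variable {θ f}

theorem mulX_injective (hf : IsLeftRegular (f.coeff 0)) : Function.Injective (mulX θ f) := by
  refine (injective_iff_map_eq_zero _).mpr fun x hx ↦ ?_
  obtain ⟨g, rfl⟩ := QuotientAddGroup.mk_surjective x
  rwa [mulX_mk, QuotientAddGroup.eq_zero_iff, mul_X_mem_range_skewMul_iff hf,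
    ← QuotientAddGroup.eq_zero_iff] at hx

theorem bijective_mk_degreeLT (hθ : Function.Bijective θ) (hf : IsUnit f.leadingCoeff) :
    Function.Bijective fun r : degreeLT R f.natDegree ↦ ((r : R[X]) : SkewQuotient θ f) := by
  constructor
  · intro r s hrs
    have hmem : (r - s : R[X]) ∈ (skewMul θ f).range := QuotientAddGroup.eq_iff_sub_mem.mp hrs
    have hdeg : (r - s : R[X]).degree < f.natDegree := mem_degreeLT.mp (sub_mem r.2 s.2)
    by_contra hne
    have hsub : (r - s : R[X]) ≠ 0 := sub_ne_zero.mpr (Subtype.coe_injective.ne hne)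
    exact ((natDegree_lt_iff_degree_lt hsub).mpr hdeg).not_ge
      (natDegree_le_of_mem_range_skewMul hθ.injective hf.isRegular.left hmem hsub)
  · intro x
    obtain ⟨g, rfl⟩ := QuotientAddGroup.mk_surjective x
    obtain ⟨r, hr, hmem⟩ := exists_mem_degreeLT_sub_mem_range_skewMul hθ.surjective hf g
    exact ⟨⟨r, hr⟩, (QuotientAddGroup.eq_iff_sub_mem.mpr hmem).symm⟩

/-- The identification of `R[X;θ] ⧸ f R[X;θ]` with `R ^ n`, where `n` is the degree of `f`: a class
is sent to the coefficients of its representative of degree `< n`. -/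
noncomputable def equivFun (hθ : Function.Bijective θ) (hf : IsUnit f.leadingCoeff) :
    SkewQuotient θ f ≃ (Fin f.natDegree → R) :=
  (Equiv.ofBijective _ (bijective_mk_degreeLT hθ hf)).symm.trans
    (degreeLTEquiv R f.natDegree).toEquiv

protected theorem finite [Finite R] (hθ : Function.Bijective θ) (hf : IsUnit f.leadingCoeff) :
    Finite (SkewQuotient θ f) :=
  .of_equiv _ (equivFun hθ hf).symm

theorem natCard_eq (hθ : Function.Bijective θ) (hf : IsUnit f.leadingCoeff) :
    Nat.card (SkewQuotient θ f) = Nat.card R ^ f.natDegree := by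
  rw [Nat.card_congr (equivFun hθ hf), Nat.card_fun, Nat.card_fin]

theorem mk_one_ne_zero (hθ : Function.Injective θ) (hf : IsLeftRegular f.leadingCoeff)
    (hn : 1 ≤ f.natDegree) : ((1 : R[X]) : SkewQuotient θ f) ≠ 0 := by
  have : Nontrivial R := .of_polynomial_ne (ne_zero_of_natDegree_gt hn)
  intro h
  have hle := natDegree_le_of_mem_range_skewMul hθ hf
    ((QuotientAddGroup.eq_zero_iff _).mp h) one_ne_zero
  rw [natDegree_one] at hle
  lia

end SkewQuotient

end Ring

theorem skewMulCoeff_eq_coeff_skewMul {F : Type*} [Field F] (θ : RingAut F) (f g : F[X]) (k : ℕ) :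
    skewMulCoeff θ f g k = (skewMul (θ : F →+* F) f g).coeff k := by
  simp [skewMulCoeff, coeff_skewMul, RingAut.coe_pow]

theorem exists_skew_right_multiple_X_pow_sub_one_general {R : Type*} [Ring R] [Finite R]
    {θ : R →+* R} (hθ : Function.Injective θ) {f : R[X]} (hn : 1 ≤ f.natDegree)
    (hlead : IsUnit f.leadingCoeff) (hf0 : IsLeftRegular (f.coeff 0)) :
    ∃ (m : ℕ) (q : R[X]), f.natDegree ≤ m ∧ m < Nat.card R ^ f.natDegree ∧
      skewMul θ f q = X ^ m - 1 := by
  have : Nontrivial R := .of_polynomial_ne (ne_zero_of_natDegree_gt hn)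
  have hbij : Function.Bijective θ := Finite.injective_iff_bijective.mp hθ
  have hreg : IsLeftRegular f.leadingCoeff := hlead.isRegular.left
  have := SkewQuotient.finite hbij hlead
  obtain ⟨m, hm0, hm, hiter⟩ := exists_iterate_eq_self_of_injective
    (SkewQuotient.mulX_injective hf0) (map_zero (SkewQuotient.mulX θ f))
    (SkewQuotient.mk_one_ne_zero hθ hreg hn)
  rw [SkewQuotient.natCard_eq hbij hlead] at hm
  rw [SkewQuotient.iterate_mulX_mk, one_mul, QuotientAddGroup.eq_iff_sub_mem] at hiter
  have hnm : f.natDegree ≤ m := by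
    have hle := natDegree_le_of_mem_range_skewMul hθ hreg hiter (X_pow_sub_C_ne_zero hm0 1)
    rwa [← C_1, natDegree_X_pow_sub_C] at hle
  obtain ⟨q, hq⟩ := hiter
  exact ⟨m, q, hnm, hm, hq⟩

/-- In `R = F_q[X;θ]`, for any `f` of degree `n ≥ 1` with nonzero constant
term, there is an integer `m` with `n ≤ m ≤ q^n + n − 2` such that `X^m − 1 = f·q`
for some `q ∈ R` (skew multiplication). -/
theorem exists_skew_right_multiple_X_pow_sub_one {F : Type*} [Field F] [Fintype F]
    (θ : RingAut F) (f : Polynomial F) (n : ℕ) (hn : 1 ≤ n)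
    (hdeg : f.natDegree = n) (hf0 : f.coeff 0 ≠ 0) :
    ∃ (m : ℕ) (q : Polynomial F), n ≤ m ∧ m ≤ Fintype.card F ^ n + n - 2 ∧
      ∀ k : ℕ, skewMulCoeff θ f q k = (X ^ m - 1 : Polynomial F).coeff k := by
  subst hdeg
  obtain ⟨m, q, hnm, hm, hq⟩ := exists_skew_right_multiple_X_pow_sub_one_general
    (θ := (θ : F →+* F)) θ.injective hn
    (leadingCoeff_ne_zero.mpr (ne_zero_of_natDegree_gt hn)).isUnit (IsRegular.of_ne_zero hf0).left
  rw [Nat.card_eq_fintype_card] at hm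
  exact ⟨m, q, hnm, by lia, fun k ↦ by rw [skewMulCoeff_eq_coeff_skewMul, hq]⟩
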